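/- Internalization of logical equivalence in LPQ⊃,F: for all formulas A1, A2 of LPQ⊃,F(Σ), A1 ≡ A2 (logical equivalence) if and only if ⊨ (A1 ↔ A2) ∧ (¬A1 ↔ ¬A2), where A ↔ B abbreviates (A ⊃ B) ∧ (B ⊃ A). -/

import Mathlib

namespace LPQ

/-- The three truth values: true, false, both-true-and-false. -/
inductive TV : Type where
  | t : TV
  | f : TV
  | b : TV
deriving DecidableEq

/-- A first-order signature: function symbols and predicate symbols of each arity. -/
structure Signature : Type 1 where
  Func : ℕ → Type
  Pred : ℕ → Type

/-- Terms over a signature (variables are natural numbers). -/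
inductive Term (σ : Signature) : Type where
  | var : ℕ → Term σ
  | func : {n : ℕ} → σ.Func n → (Fin n → Term σ) → Term σ

/-- Formulas of LPQ⊃,F over a signature. -/
inductive Formula (σ : Signature) : Type where
  | falsum : Formula σ
  | pred : {n : ℕ} → σ.Pred n → (Fin n → Term σ) → Formula σ
  | eq : Term σ → Term σ → Formula σ
  | neg : Formula σ → Formula σ
  | and : Formula σ → Formula σ → Formula σ
  | or : Formula σ → Formula σ → Formula σ
  | imp : Formula σ → Formula σ → Formula σ
  | all : ℕ → Formula σ → Formula σ
  | ex : ℕ → Formula σ → Formula σ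

variable {σ : Signature}

/-- Free variables of a term. -/
def Term.fv : Term σ → Set ℕ
  | .var x => {x}
  | .func _ ts => ⋃ i, (ts i).fv

/-- Free variables of a formula. -/
def Formula.fv : Formula σ → Set ℕ
  | .falsum => ∅
  | .pred _ ts => ⋃ i, (ts i).fv
  | .eq u v => u.fv ∪ v.fv
  | .neg A => A.fv
  | .and A B => A.fv ∪ B.fv
  | .or A B => A.fv ∪ B.fv
  | .imp A B => A.fv ∪ B.fv
  | .all x A => A.fv \ {x}
  | .ex x A => A.fv \ {x}

/-- A structure of LPQ⊃,F(σ): a nonempty domain, interpretations of the function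
symbols, three-valued interpretations of the predicate symbols, and a three-valued
interpretation of equality which is designated on the diagonal. -/
structure Structure (σ : Signature) : Type 1 where
  Dom : Type
  nonempty : Nonempty Dom
  interpFunc : {n : ℕ} → σ.Func n → (Fin n → Dom) → Dom
  interpPred : {n : ℕ} → σ.Pred n → (Fin n → Dom) → TV
  interpEq : Dom → Dom → TV
  interpEq_refl : ∀ d, interpEq d d = TV.t ∨ interpEq d d = TV.b

/-- Value of a term in a structure under an assignment. -/
def Term.eval (M : Structure σ) (α : ℕ → M.Dom) : Term σ → M.Dom
  | .var x => α x
  | .func f ts => M.interpFunc f (fun i => (ts i).eval M α)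

open Classical in
/-- The three-valued interpretation of formulas of LPQ⊃,F. -/
noncomputable def Formula.eval (M : Structure σ) : (ℕ → M.Dom) → Formula σ → TV
  | α, .pred P ts => M.interpPred P (fun i => (ts i).eval M α)
  | α, .eq u v => M.interpEq (u.eval M α) (v.eval M α)
  | _, .falsum => TV.f
  | α, .neg A =>
      match A.eval M α with
      | TV.t => TV.f
      | TV.f => TV.t
      | TV.b => TV.b
  | α, .and A B =>
      match A.eval M α, B.eval M α with
      | TV.t, TV.t => TV.t
      | TV.f, _ => TV.f
      | _, TV.f => TV.f
      | _, _ => TV.b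
  | α, .or A B =>
      match A.eval M α, B.eval M α with
      | TV.t, _ => TV.t
      | _, TV.t => TV.t
      | TV.f, TV.f => TV.f
      | _, _ => TV.b
  | α, .imp A B =>
      match A.eval M α, B.eval M α with
      | TV.f, _ => TV.t
      | _, TV.t => TV.t
      | _, TV.f => TV.f
      | _, _ => TV.b
  | α, .all x A =>
      if ∀ d, Formula.eval M (Function.update α x d) A = TV.t then TV.t
      else if ∃ d, Formula.eval M (Function.update α x d) A = TV.f then TV.f
      else TV.b
  | α, .ex x A =>
      if ∃ d, Formula.eval M (Function.update α x d) A = TV.t then TV.t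
      else if ∀ d, Formula.eval M (Function.update α x d) A = TV.f then TV.f
      else TV.b

/-- Logical consequence of LPQ⊃,F: in every structure under every assignment,
either some premise is false or the conclusion is true or both-true-and-false. -/
def LCon (Γ : Set (Formula σ)) (A : Formula σ) : Prop :=
  ∀ (M : Structure σ) (α : ℕ → M.Dom),
    (∃ B ∈ Γ, B.eval M α = TV.f) ∨ (A.eval M α = TV.t ∨ A.eval M α = TV.b)

/-- Logical equivalence of LPQ⊃,F: the same truth value in every structure
under every assignment. -/
def LEqv (A1 A2 : Formula σ) : Prop :=
  ∀ (M : Structure σ) (α : ℕ → M.Dom), A1.eval M α = A2.eval M α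

end LPQ

namespace LPQ

/-- Bi-implication A ↔ B, as the abbreviation (A ⊃ B) ∧ (B ⊃ A). -/
def Formula.biimp {σ : Signature} (A B : Formula σ) : Formula σ :=
  (A.imp B).and (B.imp A)

/-- **Internalization of logical equivalence in LPQ⊃,F**: A1 ≡ A2 iff
⊨ (A1 ↔ A2) ∧ (¬A1 ↔ ¬A2). -/
theorem internalization_of_logical_equivalence (σ : Signature)
    (A1 A2 : Formula σ) :
    LEqv A1 A2 ↔ LCon ∅ ((A1.biimp A2).and (A1.neg.biimp A2.neg)) := by
  unfold LEqv LCon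
  refine forall_congr' fun M => forall_congr' fun α => ?_
  simp only [Formula.biimp, Formula.eval]
  generalize Formula.eval M α A1 = x
  generalize Formula.eval M α A2 = y
  cases x <;> cases y <;> simp

end LPQ
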